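/- arXiv:math/0411012 — 5 statements merged into one kernel-verified Lean document; each statement's English description precedes it below -/
import Mathlib

section
/- Let f_1, …, f_m be linear tropical polynomials in n variables (i.e., every exponent vector in each support has total degree at most 1). If the tropical prevariety P = ⋂_{i=1}^m T(f_i) is nonempty, then P is a connected subset of ℝ^n (with the Euclidean topology). -/
open Finset Pointwise

/-- The affine-linear function given by a tropical term with coefficient `c`
and exponent vector `α`. -/
def tropTerm {n : ℕ} (c : ℝ) (α : Fin n → ℕ) (x : Fin n → ℝ) : ℝ :=
  c + ∑ j, (α j : ℝ) * x j

/-- The tropical hypersurface of the tropical polynomial with support `A`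
and coefficients `c`: the set of points where the minimum of the terms is
attained at least twice. -/
def tropHyp {n : ℕ} (A : Finset (Fin n → ℕ)) (c : (Fin n → ℕ) → ℝ) :
    Set (Fin n → ℝ) :=
  {x | ∃ α ∈ A, ∃ β ∈ A, α ≠ β ∧
    tropTerm (c α) α x = tropTerm (c β) β x ∧
    ∀ γ ∈ A, tropTerm (c α) α x ≤ tropTerm (c γ) γ x}

/-- A tropical polynomial: a (finite) support of exponent vectors, and coefficients. -/
structure TropPoly (n : ℕ) where
  supp : Finset (Fin n → ℕ)
  coeff : (Fin n → ℕ) → ℝ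

def TropPoly.hyp {n : ℕ} (f : TropPoly n) : Set (Fin n → ℝ) :=
  tropHyp f.supp f.coeff

/-- Tropical product of two tropical polynomials. -/
noncomputable def TropPoly.mul {n : ℕ} (f g : TropPoly n) : TropPoly n where
  supp := f.supp + g.supp
  coeff := fun γ =>
    sInf {r | ∃ α ∈ f.supp, ∃ β ∈ g.supp, α + β = γ ∧ r = f.coeff α + g.coeff β}

/-- The tropical multiplicative unit (the constant polynomial `0`). -/
def TropPoly.one (n : ℕ) : TropPoly n := ⟨{0}, fun _ => 0⟩

/-- Tropical product of a list of tropical polynomials. -/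
noncomputable def TropPoly.listProd {n : ℕ} (l : List (TropPoly n)) : TropPoly n :=
  l.foldr TropPoly.mul (TropPoly.one n)

/-- The exponent vector `k · e_i`. -/
def single {n : ℕ} (i : Fin n) (k : ℕ) : Fin n → ℕ :=
  fun j => if j = i then k else 0

/-!
A term of degree at most one is a constant or a constant plus a coordinate, so it sends the tropical
combination `x ⊓ (y + t)`, `0 ≤ t`, to the same combination of its values at `x` and `y` (a constant
`c` is `c ⊓ (c + t)` because `0 ≤ t`). Having its minimum attained twice survives such combinations,
since the combined minimum is inherited from whichever function has the smaller one. Hence the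
prevariety is tropically convex: decreasing `t` to `0` from a value with `x ≤ y + t` moves `x` to
`x ⊓ y`, and likewise `y`.
-/

/-- The minimum of `u` over `s` is attained at least twice: the tropical vanishing of a family of
terms indexed by `s`. -/
def MinAttainedTwice {κ R : Type*} [LE R] (s : Set κ) (u : κ → R) : Prop :=
  ∃ a ∈ s, ∃ b ∈ s, a ≠ b ∧ u a = u b ∧ ∀ k ∈ s, u a ≤ u k

namespace MinAttainedTwice

variable {κ R : Type*} {s : Set κ}

lemma congr [LE R] {u v : κ → R} (hu : MinAttainedTwice s u) (huv : s.EqOn u v) :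
    MinAttainedTwice s v := by
  obtain ⟨a, ha, b, hb, hab, heq, hmin⟩ := hu
  exact ⟨a, ha, b, hb, hab, by rw [← huv ha, ← huv hb, heq],
    fun k hk => by rw [← huv ha, ← huv hk]; exact hmin k hk⟩

lemma comp_monotone {R' : Type*} [Preorder R] [Preorder R'] {u : κ → R} {g : R → R'}
    (hu : MinAttainedTwice s u) (hg : Monotone g) : MinAttainedTwice s (g ∘ u) := by
  obtain ⟨a, ha, b, hb, hab, heq, hmin⟩ := hu
  exact ⟨a, ha, b, hb, hab, congrArg g heq, fun k hk => hg (hmin k hk)⟩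

lemma inf [LinearOrder R] {u v : κ → R} (hu : MinAttainedTwice s u)
    (hv : MinAttainedTwice s v) : MinAttainedTwice s (u ⊓ v) := by
  obtain ⟨a, ha, b, hb, hab, hu_eq, hu_min⟩ := hu
  obtain ⟨a', ha', b', hb', hab', hv_eq, hv_min⟩ := hv
  wlog hle : u a ≤ v a' generalizing u v a b a' b'
  · rw [inf_comm]
    exact this a' ha' b' hb' hab' hv_eq hv_min a ha b hb hab hu_eq hu_min (le_of_not_ge hle)
  have hinf : ∀ k ∈ s, u a ≤ (u ⊓ v) k := fun k hk =>
    le_inf (hu_min k hk) (hle.trans (hv_min k hk))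
  have ha_eq : (u ⊓ v) a = u a := inf_eq_left.2 (hle.trans (hv_min a ha))
  have hb_eq : (u ⊓ v) b = u b := inf_eq_left.2 (hu_eq ▸ hle.trans (hv_min b hb))
  exact ⟨a, ha, b, hb, hab, by rw [ha_eq, hb_eq, hu_eq], ha_eq ▸ hinf⟩

end MinAttainedTwice

/-- Tropical (min-plus) convexity of a subset of affine space: closure under tropical combinations
`(s + x) ⊓ (t + y)` of total weight `min s t = 0`. By symmetry it suffices to allow `s = 0 ≤ t`. -/
def TropConvex {ι : Type*} (S : Set (ι → ℝ)) : Prop :=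
  ∀ ⦃x⦄, x ∈ S → ∀ ⦃y⦄, y ∈ S → ∀ ⦃t : ℝ⦄, 0 ≤ t → x ⊓ (y + Function.const ι t) ∈ S

namespace TropConvex

variable {ι : Type*} {S : Set (ι → ℝ)}

lemma iInter {κ : Sort*} {S : κ → Set (ι → ℝ)} (hS : ∀ k, TropConvex (S k)) :
    TropConvex (⋂ k, S k) := fun _ hx _ hy _ ht =>
  Set.mem_iInter.2 fun k => hS k (Set.mem_iInter.1 hx k) (Set.mem_iInter.1 hy k) ht

lemma joinedIn_inf [Finite ι] (hS : TropConvex S) {x y : ι → ℝ} (hx : x ∈ S) (hy : y ∈ S) :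
    JoinedIn S x (x ⊓ y) := by
  let ray : ℝ → ι → ℝ := fun t => x ⊓ (y + Function.const ι t)
  have hray : IsPathConnected (ray '' Set.Ici 0) :=
    ((convex_Ici 0).isPathConnected ⟨0, Set.self_mem_Ici⟩).image <|
      continuous_pi fun _ => continuous_const.inf (continuous_const.add continuous_id)
  have hray_sub : ray '' Set.Ici 0 ⊆ S := Set.image_subset_iff.2 fun t ht => hS hx hy ht
  have hx_mem : x ∈ ray '' Set.Ici 0 := by
    obtain ⟨t, ht⟩ := Finite.bddAbove_range (x - y)
    refine ⟨max t 0, le_max_right t 0, inf_eq_left.2 fun j => ?_⟩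
    have hj : x j - y j ≤ max t 0 := (ht ⟨j, rfl⟩).trans (le_max_left t 0)
    exact sub_le_iff_le_add'.1 hj
  have hinf_mem : x ⊓ y ∈ ray '' Set.Ici 0 := ⟨0, Set.self_mem_Ici, by simp [ray]⟩
  exact (hray.joinedIn x hx_mem _ hinf_mem).mono hray_sub

lemma isPathConnected [Finite ι] (hS : TropConvex S) (hne : S.Nonempty) : IsPathConnected S :=
  isPathConnected_iff.2 ⟨hne, fun x hx y hy =>
    (hS.joinedIn_inf hx hy).trans (inf_comm x y ▸ (hS.joinedIn_inf hy hx).symm)⟩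

end TropConvex

lemma eq_zero_or_eq_single_of_sum_le_one {ι : Type*} [Fintype ι] [DecidableEq ι] {α : ι → ℕ}
    (hα : ∑ j, α j ≤ 1) : α = 0 ∨ ∃ i, α = Pi.single i 1 := by
  refine or_iff_not_imp_left.2 fun hα_ne => ?_
  obtain ⟨i, hi⟩ := Function.ne_iff.1 hα_ne
  have unique_support : ∀ j, α j ≠ 0 → i = j ∧ α i = 1 := fun j hj =>
    Finset.sum_le_one_iff.1 hα i j (mem_univ i) (mem_univ j) hi hj
  refine ⟨i, funext fun j => ?_⟩
  obtain rfl | hij := eq_or_ne j i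
  · rw [Pi.single_eq_same, (unique_support j hi).2]
  · rw [Pi.single_eq_of_ne hij]
    exact of_not_not fun hj => hij (unique_support j hj).1.symm

section TropTerm

variable {n : ℕ} (c : ℝ)

lemma tropTerm_zero (x : Fin n → ℝ) : tropTerm c 0 x = c := by
  simp [tropTerm]

lemma tropTerm_single (i : Fin n) (x : Fin n → ℝ) : tropTerm c (Pi.single i 1) x = c + x i := by
  simp [tropTerm, Pi.single_apply]

lemma tropTerm_inf_add_const {α : Fin n → ℕ} (hα : ∑ j, α j ≤ 1) (x y : Fin n → ℝ) {t : ℝ}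
    (ht : 0 ≤ t) :
    tropTerm c α (x ⊓ (y + Function.const _ t)) = tropTerm c α x ⊓ (tropTerm c α y + t) := by
  obtain rfl | ⟨i, rfl⟩ := eq_zero_or_eq_single_of_sum_le_one hα
  · simp only [tropTerm_zero, inf_of_le_left (le_add_of_nonneg_right ht)]
  · simp only [tropTerm_single, Pi.inf_apply, Pi.add_apply, Function.const_apply, add_inf,
      add_assoc]

end TropTerm

lemma mem_tropHyp_iff {n : ℕ} {A : Finset (Fin n → ℕ)} {c : (Fin n → ℕ) → ℝ} {x : Fin n → ℝ} :
    x ∈ tropHyp A c ↔ MinAttainedTwice (A : Set (Fin n → ℕ)) fun α => tropTerm (c α) α x :=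
  Iff.rfl

lemma tropConvex_tropHyp {n : ℕ} {A : Finset (Fin n → ℕ)} (c : (Fin n → ℕ) → ℝ)
    (hA : ∀ α ∈ A, ∑ j, α j ≤ 1) : TropConvex (tropHyp A c) := by
  intro x hx y hy t ht
  rw [mem_tropHyp_iff] at hx hy ⊢
  exact (hx.inf (hy.comp_monotone (add_left_mono (a := t)))).congr fun α hα =>
    (tropTerm_inf_add_const (c α) (hA α hα) x y ht).symm

theorem linear_prevariety_connected_general {n : ℕ} {ι : Sort*}
    (A : ι → Finset (Fin n → ℕ)) (c : ι → (Fin n → ℕ) → ℝ)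
    (hlin : ∀ i, ∀ α ∈ A i, ∑ j, α j ≤ 1)
    (hne : (⋂ i, tropHyp (A i) (c i)).Nonempty) :
    IsPathConnected (⋂ i, tropHyp (A i) (c i)) :=
  (TropConvex.iInter fun i => tropConvex_tropHyp (c i) (hlin i)).isPathConnected hne

/-- If `f₁, …, fₘ` are linear tropical polynomials in `n` variables and the
tropical prevariety `⋂ i, T(fᵢ)` is nonempty, then it is connected. -/
theorem linear_prevariety_connected (n m : ℕ)
    (A : Fin m → Finset (Fin n → ℕ)) (c : Fin m → (Fin n → ℕ) → ℝ)
    (hA : ∀ i, (A i).Nonempty)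
    (hlin : ∀ i, ∀ α ∈ A i, (∑ j, α j) ≤ 1)
    (hne : (⋂ i, tropHyp (A i) (c i)).Nonempty) :
    IsConnected (⋂ i, tropHyp (A i) (c i)) :=
  (linear_prevariety_connected_general A c hlin hne).isConnected
end

section
/- Let f = f(x_1, x_2, x_3) be a tropical polynomial in 3 variables of degree at most 2 (every exponent vector α in its support satisfies α_1 + α_2 + α_3 ≤ 2). If T(f) contains every point x ∈ {0,1}^3 with x_1 = 1 or x_2 = 1 or x_3 = 1, then T(f) also contains the point (0,0,0). -/
/-!
A tropical polynomial is monotone, because its exponents are nonnegative. Hence, if `x ≥ p` and the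
value at `x` does not exceed the value at `p`, the terms attaining the minimum at `x` attain it at
`p` as well. A monomial attaining the minimum at `p` whose degree is less than the number of
variables omits some variable `xᵢ`, so moving from `p` in the direction `eᵢ` does not increase
the value of the polynomial.
-/

open Finset Pointwise

theorem exists_eq_zero_of_sum_lt_card {ι : Type*} {s : Finset ι} {f : ι → ℕ}
    (h : ∑ i ∈ s, f i < #s) : ∃ i ∈ s, f i = 0 := by
  obtain ⟨i, hi, hlt⟩ := exists_lt_of_sum_lt (h.trans_eq (card_eq_sum_ones s))
  exact ⟨i, hi, Nat.lt_one_iff.mp hlt⟩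

section TropicalHypersurface

variable {n : ℕ}

theorem tropTerm_mono (a : ℝ) (α : Fin n → ℕ) : Monotone (tropTerm a α) := fun _ _ hxy =>
  add_le_add_right (sum_le_sum fun j _ => mul_le_mul_of_nonneg_left (hxy j) (α j).cast_nonneg) a

theorem tropTerm_add_single (a : ℝ) (α : Fin n → ℕ) (p : Fin n → ℝ) (i : Fin n) (t : ℝ) :
    tropTerm a α (p + Pi.single i t) = tropTerm a α p + α i * t := by
  simp [tropTerm, mul_add, sum_add_distrib, add_assoc, Pi.single_apply]

variable {A : Finset (Fin n → ℕ)} {c : (Fin n → ℕ) → ℝ} {p : Fin n → ℝ}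

theorem mem_tropHyp_of_le_of_tropTerm_le {x : Fin n → ℝ} (hx : x ∈ tropHyp A c) (hpx : p ≤ x)
    {α : Fin n → ℕ} (hα : α ∈ A) (hle : ∀ γ ∈ A, tropTerm (c α) α x ≤ tropTerm (c γ) γ p) :
    p ∈ tropHyp A c := by
  obtain ⟨β, hβ, β', hβ', hne, heq, hmin⟩ := hx
  have hβ_min : ∀ γ ∈ A, tropTerm (c β) β p ≤ tropTerm (c γ) γ p := fun γ hγ => calc
    tropTerm (c β) β p ≤ tropTerm (c β) β x := tropTerm_mono _ _ hpx
    _ ≤ tropTerm (c α) α x := hmin α hα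
    _ ≤ tropTerm (c γ) γ p := hle γ hγ
  have hβ'_le : tropTerm (c β') β' p ≤ tropTerm (c β) β p := calc
    tropTerm (c β') β' p ≤ tropTerm (c β') β' x := tropTerm_mono _ _ hpx
    _ = tropTerm (c β) β x := heq.symm
    _ ≤ tropTerm (c α) α x := hmin α hα
    _ ≤ tropTerm (c β) β p := hle β hβ
  exact ⟨β, hβ, β', hβ', hne, (hβ_min β' hβ').antisymm hβ'_le, hβ_min⟩

theorem quadric_contains_origin_general (hA : A.Nonempty) (hzero : ∀ α ∈ A, ∃ i, α i = 0)
    {t : Fin n → ℝ} (ht : 0 ≤ t) (hmem : ∀ i, p + Pi.single i (t i) ∈ tropHyp A c) :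
    p ∈ tropHyp A c := by
  obtain ⟨α, hα, hmin⟩ := A.exists_min_image (fun γ => tropTerm (c γ) γ p) hA
  obtain ⟨i, hi⟩ := hzero α hα
  have hp_le : p ≤ p + Pi.single i (t i) := le_add_of_nonneg_right (Pi.single_nonneg.mpr (ht i))
  have hα_eq : tropTerm (c α) α (p + Pi.single i (t i)) = tropTerm (c α) α p := by
    rw [tropTerm_add_single, hi, Nat.cast_zero, zero_mul, add_zero]
  exact mem_tropHyp_of_le_of_tropTerm_le (hmem i) hp_le hα fun γ hγ => hα_eq.trans_le (hmin γ hγ)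

end TropicalHypersurface

/-- If a quadratic tropical polynomial `f` in three variables has all points of
`{0,1}³` with some coordinate equal to `1` on its tropical hypersurface, then
`(0,0,0) ∈ T(f)` as well. -/
theorem quadric_contains_origin
    (A : Finset (Fin 3 → ℕ)) (c : (Fin 3 → ℕ) → ℝ) (hA : A.Nonempty)
    (hdeg : ∀ α ∈ A, (∑ j, α j) ≤ 2)
    (hcube : ∀ x : Fin 3 → ℝ, (∀ j, x j = 0 ∨ x j = 1) →
      (x 0 = 1 ∨ x 1 = 1 ∨ x 2 = 1) → x ∈ tropHyp A c) :
    (fun _ => (0 : ℝ)) ∈ tropHyp A c := by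
  have hzero : ∀ α ∈ A, ∃ i, α i = 0 := fun α hα => by
    simpa using exists_eq_zero_of_sum_lt_card ((hdeg α hα).trans_lt (by simp))
  have hunit : ∀ i : Fin 3, Pi.single i 1 ∈ tropHyp A c := fun i =>
    hcube _ (fun j => by by_cases h : j = i <;> simp [h]) (by fin_cases i <;> simp)
  exact quadric_contains_origin_general (p := 0) (t := 1) hA hzero zero_le_one fun i => by
    simpa using hunit i
end

section
/- Let f and g be tropical polynomials in n variables. Then the tropical hypersurface of their tropical product is the union of their tropical hypersurfaces: T(f ⊙ g) = T(f) ∪ T(g). -/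
open Finset Pointwise

/-!
For a point `x`, let `in_x(f)` be the set of exponents at which the minimum defining `f` is attained
at `x`, so that `x ∈ T(f)` exactly when `in_x(f)` has two distinct elements. Since the coefficients
of `f ⊙ g` are attained minima of sums, `in_x(f ⊙ g) = in_x(f) + in_x(g)`, and by cancellation
a sum of two nonempty sets has two distinct elements exactly when one of the summands does.
-/

section Minimizers

variable {M R : Type*}

/-- The set of points of `s` at which `u` attains its minimum over `s`. -/
def minimizersOn [Preorder R] (u : M → R) (s : Set M) : Set M :=
  {a ∈ s | IsMinOn u s a}

theorem minimizersOn_nonempty [LinearOrder R] (u : M → R) {s : Set M} (hs : s.Finite)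
    (hne : s.Nonempty) : (minimizersOn u s).Nonempty :=
  s.exists_min_image u hs hne

theorem minimizersOn_nontrivial_iff [PartialOrder R] {u : M → R} {s : Set M} :
    (minimizersOn u s).Nontrivial ↔
      ∃ a ∈ s, ∃ b ∈ s, a ≠ b ∧ u a = u b ∧ ∀ c ∈ s, u a ≤ u c := by
  constructor
  · rintro ⟨a, ⟨ha, hmin_a⟩, b, ⟨hb, hmin_b⟩, hne⟩
    exact ⟨a, ha, b, hb, hne, le_antisymm (hmin_a hb) (hmin_b ha), hmin_a⟩
  · rintro ⟨a, ha, b, hb, hne, heq, hmin⟩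
    exact ⟨a, ⟨ha, hmin⟩, b, ⟨hb, fun c hc ↦ heq.symm.trans_le (hmin c hc)⟩, hne⟩

/-- On `s + t`, the function `w` is the infimal convolution of `u` on `s` and `v` on `t`, with all
infima attained. -/
def IsMinConvOn [Add M] [Add R] [Preorder R] (u v w : M → R) (s t : Set M) : Prop :=
  ∀ c ∈ s + t, IsLeast {r | ∃ a ∈ s, ∃ b ∈ t, a + b = c ∧ r = u a + v b} (w c)

theorem IsMinConvOn.le_add [Add M] [Add R] [Preorder R] {u v w : M → R} {s t : Set M}
    (h : IsMinConvOn u v w s t) {a b : M} (ha : a ∈ s) (hb : b ∈ t) : w (a + b) ≤ u a + v b :=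
  (h _ (Set.add_mem_add ha hb)).2 ⟨a, ha, b, hb, rfl, rfl⟩

theorem IsMinConvOn.minimizersOn_add [Add M] [AddCommMonoid R] [Preorder R]
    [IsOrderedCancelAddMonoid R] {u v w : M → R} {s t : Set M} (h : IsMinConvOn u v w s t) :
    minimizersOn w (s + t) = minimizersOn u s + minimizersOn v t := by
  apply Set.Subset.antisymm
  · rintro c ⟨hc, hmin⟩
    obtain ⟨a, ha, b, hb, rfl, hab⟩ := (h c hc).1
    have hmin_add {a' b' : M} (ha' : a' ∈ s) (hb' : b' ∈ t) : u a + v b ≤ u a' + v b' :=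
      hab.symm.trans_le ((hmin (Set.add_mem_add ha' hb')).trans (h.le_add ha' hb'))
    exact Set.add_mem_add
      ⟨ha, fun _ ha' ↦ le_of_add_le_add_right (hmin_add ha' hb)⟩
      ⟨hb, fun _ hb' ↦ le_of_add_le_add_left (hmin_add ha hb')⟩
  · rintro _ ⟨a, ⟨ha, hmin_a⟩, b, ⟨hb, hmin_b⟩, rfl⟩
    refine ⟨Set.add_mem_add ha hb, fun c hc ↦ ?_⟩
    obtain ⟨a', ha', b', hb', -, hab'⟩ := (h c hc).1
    calc w (a + b) ≤ u a + v b := h.le_add ha hb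
      _ ≤ u a' + v b' := add_le_add (hmin_a ha') (hmin_b hb')
      _ = w c := hab'.symm

end Minimizers

theorem nontrivial_add_iff {M : Type*} [Add M] [IsCancelAdd M] {s t : Set M}
    (hs : s.Nonempty) (ht : t.Nonempty) :
    (s + t).Nontrivial ↔ s.Nontrivial ∨ t.Nontrivial := by
  constructor
  · contrapose!
    exact fun ⟨hs', ht'⟩ ↦ hs'.image2 ht' (· + ·)
  · rintro (hs' | ht')
    · exact hs'.add_right ht
    · exact ht'.add_left hs

theorem tropTerm_add {n : ℕ} (c d : ℝ) (α β : Fin n → ℕ) (x : Fin n → ℝ) :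
    tropTerm (c + d) (α + β) x = tropTerm c α x + tropTerm d β x := by
  simp only [tropTerm, Pi.add_apply, Nat.cast_add, add_mul, sum_add_distrib]
  ring

theorem tropTerm_le_tropTerm_iff {n : ℕ} {c d : ℝ} {α : Fin n → ℕ} {x : Fin n → ℝ} :
    tropTerm c α x ≤ tropTerm d α x ↔ c ≤ d :=
  add_le_add_iff_right _

theorem IsMinConvOn.tropTerm {n : ℕ} {c d e : (Fin n → ℕ) → ℝ} {s t : Set (Fin n → ℕ)}
    (h : IsMinConvOn c d e s t) (x : Fin n → ℝ) :
    IsMinConvOn (fun α ↦ tropTerm (c α) α x) (fun β ↦ tropTerm (d β) β x)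
      (fun γ ↦ tropTerm (e γ) γ x) s t := by
  refine fun γ hγ ↦ ⟨?_, ?_⟩
  · obtain ⟨α, hα, β, hβ, rfl, heq⟩ := (h γ hγ).1
    exact ⟨α, hα, β, hβ, rfl, by simp only [heq, tropTerm_add]⟩
  · rintro _ ⟨α, hα, β, hβ, rfl, rfl⟩
    rw [← tropTerm_add, tropTerm_le_tropTerm_iff]
    exact h.le_add hα hβ

namespace TropPoly

variable {n : ℕ}

/-- The support of the initial form of `f` at `x`: the exponents of the terms of `f` that are
minimal at `x`. -/
def initialSupport (f : TropPoly n) (x : Fin n → ℝ) : Set (Fin n → ℕ) :=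
  minimizersOn (fun α ↦ tropTerm (f.coeff α) α x) f.supp

theorem initialSupport_nonempty {f : TropPoly n} (hf : f.supp.Nonempty) (x : Fin n → ℝ) :
    (f.initialSupport x).Nonempty :=
  minimizersOn_nonempty _ f.supp.finite_toSet hf

theorem mem_hyp_iff {f : TropPoly n} {x : Fin n → ℝ} :
    x ∈ f.hyp ↔ (f.initialSupport x).Nontrivial :=
  minimizersOn_nontrivial_iff.symm

theorem isMinConvOn_coeff_mul (f g : TropPoly n) :
    IsMinConvOn f.coeff g.coeff (f.mul g).coeff f.supp g.supp := by
  rintro γ ⟨α, hα, β, hβ, hγ⟩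
  have hfin :
      {r | ∃ α ∈ f.supp, ∃ β ∈ g.supp, α + β = γ ∧ r = f.coeff α + g.coeff β}.Finite := by
    refine (f.supp.finite_toSet.image2 (f.coeff · + g.coeff ·) g.supp.finite_toSet).subset ?_
    rintro _ ⟨α, hα, β, hβ, -, rfl⟩
    exact Set.mem_image2_of_mem hα hβ
  exact ⟨Set.Nonempty.csInf_mem ⟨_, α, hα, β, hβ, hγ, rfl⟩ hfin,
    fun _ hr ↦ csInf_le hfin.bddBelow hr⟩

theorem initialSupport_mul (f g : TropPoly n) (x : Fin n → ℝ) :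
    (f.mul g).initialSupport x = f.initialSupport x + g.initialSupport x := by
  have hsupp : ((f.mul g).supp : Set (Fin n → ℕ)) = f.supp + g.supp := coe_add f.supp g.supp
  rw [initialSupport, hsupp]
  exact ((isMinConvOn_coeff_mul f g).tropTerm x).minimizersOn_add

end TropPoly

/-- The tropical hypersurface of a tropical product is the union of the
tropical hypersurfaces of the factors: `T(f ⊙ g) = T(f) ∪ T(g)`. -/
theorem tropHyp_mul (n : ℕ) (f g : TropPoly n)
    (hf : f.supp.Nonempty) (hg : g.supp.Nonempty) :
    (f.mul g).hyp = f.hyp ∪ g.hyp := by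
  ext x
  rw [Set.mem_union, TropPoly.mem_hyp_iff, TropPoly.mem_hyp_iff, TropPoly.mem_hyp_iff,
    TropPoly.initialSupport_mul]
  exact nontrivial_add_iff (TropPoly.initialSupport_nonempty hf x)
    (TropPoly.initialSupport_nonempty hg x)
end

section
/- Let A = (a_{ij}) ∈ ℝ^{k×k} and let σ ∈ S_k be a permutation attaining the tropical determinant, i.e., Σ_i a_{i,σ(i)} = det_trop(A). For each j ∈ {1, …, k} let A_j be any matrix obtained from A by replacing the single entry (j, σ(j)) by a strictly larger real value and leaving all other entries unchanged. Then A is tropically singular if and only if det_trop(A_j) = det_trop(A) for some j ∈ {1, …, k}. -/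
open Finset

/-- The tropical determinant of a real `k × k` matrix:
`min_{σ ∈ S_k} Σ_i a_{i,σ(i)}`. -/
def tropDet {k : ℕ} (A : Matrix (Fin k) (Fin k) ℝ) : ℝ :=
  Finset.univ.inf' ⟨1, Finset.mem_univ 1⟩
    (fun σ : Equiv.Perm (Fin k) => ∑ i, A i (σ i))

/-- A matrix is tropically singular if the minimum in the tropical determinant
is attained by at least two distinct permutations. -/
def TropSingular {k : ℕ} (A : Matrix (Fin k) (Fin k) ℝ) : Prop :=
  ∃ σ τ : Equiv.Perm (Fin k), σ ≠ τ ∧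
    (∑ i, A i (σ i)) = tropDet A ∧ (∑ i, A i (τ i)) = tropDet A

/-!
If `A ≤ B` entrywise, the minimal weight stays the same exactly when some optimal permutation of
`A` keeps its weight in `B`. Raising the single entry `(j, σ j)` keeps the weight of `τ` exactly
when `τ j ≠ σ j`. So some raise preserves the minimum iff some optimal `τ` differs from `σ`
somewhere.
-/

theorem inf'_eq_inf'_iff_exists_of_le {ι α : Type*} [LinearOrder α] {s : Finset ι}
    (hs : s.Nonempty) {f g : ι → α} (hfg : ∀ x ∈ s, f x ≤ g x) :
    s.inf' hs g = s.inf' hs f ↔ ∃ x ∈ s, f x = s.inf' hs f ∧ g x = f x := by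
  constructor
  · intro h
    obtain ⟨x, hx, hgx⟩ := exists_mem_eq_inf' hs g
    have hgf : g x ≤ f x := (hgx.symm.trans h).trans_le (inf'_le f hx)
    have hgx_eq : g x = f x := hgf.antisymm (hfg x hx)
    exact ⟨x, hx, hgx_eq.symm.trans (hgx.symm.trans h), hgx_eq⟩
  · rintro ⟨x, hx, hfx, hgx⟩
    apply le_antisymm
    · exact (inf'_le g hx).trans_eq (hgx.trans hfx)
    · exact le_inf' hs g fun y hy => (inf'_le f hy).trans (hfg y hy)

/-- `B` is obtained from `A` by replacing the single entry `(j, c)` by a strictly larger one. -/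
def IsEntryRaise {m n R : Type*} [LT R] (A B : Matrix m n R) (j : m) (c : n) : Prop :=
  A j c < B j c ∧ ∀ p q, (p, q) ≠ (j, c) → B p q = A p q

namespace IsEntryRaise

variable {m n R : Type*} {j : m} {c : n}

theorem le [Preorder R] {A B : Matrix m n R} (h : IsEntryRaise A B j c) (p : m) (q : n) :
    A p q ≤ B p q := by
  by_cases hpq : (p, q) = (j, c)
  · obtain ⟨rfl, rfl⟩ := Prod.mk.inj hpq
    exact h.1.le
  · exact (h.2 p q hpq).ge

theorem apply_eq_iff [Preorder R] {A B : Matrix m n R} (h : IsEntryRaise A B j c) {p : m} {q : n} :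
    B p q = A p q ↔ (p, q) ≠ (j, c) := by
  refine ⟨fun heq hpq => ?_, h.2 p q⟩
  obtain ⟨rfl, rfl⟩ := Prod.mk.inj hpq
  exact h.1.ne' heq

theorem sum_eq_sum_iff [Fintype m] [AddCommMonoid R] [PartialOrder R]
    [IsOrderedCancelAddMonoid R] {A B : Matrix m n R} (h : IsEntryRaise A B j c) (f : m → n) :
    ∑ i, B i (f i) = ∑ i, A i (f i) ↔ f j ≠ c := by
  rw [eq_comm, sum_eq_sum_iff_of_le fun i _ => h.le i (f i)]
  simp only [mem_univ, true_imp_iff, eq_comm (a := A _ _), h.apply_eq_iff, ne_eq, Prod.mk.injEq,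
    not_and, forall_eq]

end IsEntryRaise

section MinPermSum

variable {n R : Type*} [Fintype n] [DecidableEq n] [AddCommMonoid R] [LinearOrder R]

/-- The tropical determinant `min_τ ∑ i, A i (τ i)` of a matrix indexed by an arbitrary finite type,
with entries in an arbitrary linearly ordered additive monoid. -/
def minPermSum (A : Matrix n n R) : R :=
  univ.inf' ⟨1, mem_univ 1⟩ fun τ : Equiv.Perm n => ∑ i, A i (τ i)

/-- The set of permutations attaining `minPermSum A`; tropical singularity of `A` is the
nontriviality of this set. -/
def optimalPerms (A : Matrix n n R) : Set (Equiv.Perm n) :=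
  {τ | ∑ i, A i (τ i) = minPermSum A}

theorem IsEntryRaise.minPermSum_eq_iff [IsOrderedCancelAddMonoid R] {A B : Matrix n n R} {j c : n}
    (h : IsEntryRaise A B j c) :
    minPermSum B = minPermSum A ↔ ∃ τ ∈ optimalPerms A, τ j ≠ c :=
  calc
    minPermSum B = minPermSum A ↔ ∃ τ ∈ (univ : Finset (Equiv.Perm n)),
        ∑ i, A i (τ i) = minPermSum A ∧ ∑ i, B i (τ i) = ∑ i, A i (τ i) :=
      inf'_eq_inf'_iff_exists_of_le _ fun τ _ => sum_le_sum fun i _ => h.le i (τ i)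
    _ ↔ ∃ τ ∈ optimalPerms A, τ j ≠ c := by
      simp only [mem_univ, true_and, optimalPerms, Set.mem_ofPred_eq, h.sum_eq_sum_iff]

theorem tropSingular_iff_general [IsOrderedCancelAddMonoid R] {A : Matrix n n R}
    {σ : Equiv.Perm n} (hσ : σ ∈ optimalPerms A) {B : n → Matrix n n R}
    (hB : ∀ j, IsEntryRaise A (B j) j (σ j)) :
    (optimalPerms A).Nontrivial ↔ ∃ j, minPermSum (B j) = minPermSum A :=
  calc
    (optimalPerms A).Nontrivial ↔ ∃ τ ∈ optimalPerms A, τ ≠ σ := Set.nontrivial_iff_exists_ne hσ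
    _ ↔ ∃ τ ∈ optimalPerms A, ∃ j, τ j ≠ σ j := by simp only [DFunLike.ne_iff]
    _ ↔ ∃ j, ∃ τ ∈ optimalPerms A, τ j ≠ σ j :=
      ⟨fun ⟨τ, hτ, j, hj⟩ => ⟨j, τ, hτ, hj⟩, fun ⟨j, τ, hτ, hj⟩ => ⟨τ, hτ, j, hj⟩⟩
    _ ↔ ∃ j, minPermSum (B j) = minPermSum A :=
      exists_congr fun j => (hB j).minPermSum_eq_iff.symm

end MinPermSum

theorem tropSingular_iff_optimalPerms_nontrivial {k : ℕ} {A : Matrix (Fin k) (Fin k) ℝ} :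
    TropSingular A ↔ (optimalPerms A).Nontrivial :=
  ⟨fun ⟨σ, τ, hne, hσ, hτ⟩ => ⟨σ, hσ, τ, hτ, hne⟩, fun ⟨σ, hσ, τ, hτ, hne⟩ => ⟨σ, τ, hne, hσ, hτ⟩⟩

/-- Let `σ` attain the tropical determinant of `A`, and for each `j` let `B j`
be obtained from `A` by strictly increasing the single entry `(j, σ j)`. Then
`A` is tropically singular iff `tropDet (B j) = tropDet A` for some `j`. -/
theorem tropSingular_iff (k : ℕ) (A : Matrix (Fin k) (Fin k) ℝ)
    (σ : Equiv.Perm (Fin k)) (hσ : (∑ i, A i (σ i)) = tropDet A)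
    (B : Fin k → Matrix (Fin k) (Fin k) ℝ)
    (hB : ∀ j, A j (σ j) < (B j) j (σ j) ∧
      ∀ p q, (p, q) ≠ (j, σ j) → (B j) p q = A p q) :
    TropSingular A ↔ ∃ j, tropDet (B j) = tropDet A :=
  tropSingular_iff_optimalPerms_nontrivial.trans (tropSingular_iff_general hσ hB)
end

section
/- Let f_1, …, f_m be tropical polynomials in n variables. Then there exist finitely many closed convex subsets Q_1, …, Q_t of ℝ^n, each of which is the solution set of finitely many affine linear equations and non-strict affine linear inequalities with coefficients taken from the exponents and coefficients of the f_i, such that ⋂_{i=1}^m T(f_i) = ⋃_{s=1}^t Q_s. In particular, every tropical prevariety is a closed subset of ℝ^n and a finite union of convex sets. -/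
open Finset Pointwise

/-- `R` is an affine-linear equation or non-strict inequality between two
tropical terms of the polynomials `f_i` (with support `A i` and coefficients
`c i`). -/
def IsTermConstraint {n m : ℕ} (A : Fin m → Finset (Fin n → ℕ))
    (c : Fin m → (Fin n → ℕ) → ℝ) (R : Set (Fin n → ℝ)) : Prop :=
  ∃ i i' : Fin m, ∃ α ∈ A i, ∃ β ∈ A i',
    R = {x | tropTerm (c i α) α x = tropTerm (c i' β) β x} ∨
    R = {x | tropTerm (c i α) α x ≤ tropTerm (c i' β) β x}

/-!
A point lies on `T(f)` exactly when some pair of distinct exponents attains the minimum there, so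
`T(f)` is the union, over ordered pairs of distinct exponents, of the cells on which the given pair
is minimal. Distributing the intersection over these unions writes the prevariety as the union,
over choices of one pair for each polynomial, of intersections of cells.
-/

section AffineConstraints

variable {𝕜 E F : Type*} [Ring 𝕜] [PartialOrder 𝕜] [AddCommGroup E] [Module 𝕜 E]
  [AddCommGroup F] [Module 𝕜 F]

theorem convex_setOf_affineMap_eq (f g : E →ᵃ[𝕜] F) : Convex 𝕜 {x | f x = g x} := by
  have preimage_eq : {x | f x = g x} = (f - g) ⁻¹' {0} := by
    ext x
    simp [sub_eq_zero]
  exact preimage_eq ▸ (convex_singleton 0).affine_preimage (f - g)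

theorem convex_setOf_affineMap_le [PartialOrder F] [IsOrderedAddMonoid F] [PosSMulMono 𝕜 F]
    (f g : E →ᵃ[𝕜] F) : Convex 𝕜 {x | f x ≤ g x} := by
  have preimage_eq : {x | f x ≤ g x} = (g - f) ⁻¹' Set.Ici 0 := by
    ext x
    simp
  exact preimage_eq ▸ (convex_Ici 0).affine_preimage (g - f)

end AffineConstraints

/-- The function `tropTerm c α` bundled as an affine map, which makes the convexity of affine
constraints applicable to it. -/
def tropTermAffineMap {n : ℕ} (c : ℝ) (α : Fin n → ℕ) : (Fin n → ℝ) →ᵃ[ℝ] ℝ :=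
  AffineMap.const ℝ _ c + (dotProductBilin ℝ ℝ fun j => (α j : ℝ)).toAffineMap

theorem coe_tropTermAffineMap {n : ℕ} (c : ℝ) (α : Fin n → ℕ) :
    ⇑(tropTermAffineMap c α) = tropTerm c α :=
  rfl

theorem continuous_tropTerm {n : ℕ} (c : ℝ) (α : Fin n → ℕ) : Continuous (tropTerm c α) := by
  unfold tropTerm
  fun_prop

namespace IsTermConstraint

variable {n m : ℕ} {A : Fin m → Finset (Fin n → ℕ)} {c : Fin m → (Fin n → ℕ) → ℝ}
  {R : Set (Fin n → ℝ)}

theorem isClosed (hR : IsTermConstraint A c R) : IsClosed R := by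
  obtain ⟨i, i', α, -, β, -, rfl | rfl⟩ := hR
  · exact isClosed_eq (continuous_tropTerm _ _) (continuous_tropTerm _ _)
  · exact isClosed_le (continuous_tropTerm _ _) (continuous_tropTerm _ _)

theorem convex (hR : IsTermConstraint A c R) : Convex ℝ R := by
  obtain ⟨i, i', α, -, β, -, rfl | rfl⟩ := hR <;> simp only [← coe_tropTermAffineMap]
  · exact convex_setOf_affineMap_eq _ _
  · exact convex_setOf_affineMap_le _ _

end IsTermConstraint

/-- For a pair `p` of exponents in `A`, the constraints saying that both of their terms attain the
minimum over `A`. Their intersection is the closed cell of `p`, a polyhedral piece of the tropical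
hypersurface when `p` is off-diagonal. -/
def tropCellConstraints {n : ℕ} (A : Finset (Fin n → ℕ)) (c : (Fin n → ℕ) → ℝ)
    (p : (Fin n → ℕ) × (Fin n → ℕ)) : Set (Set (Fin n → ℝ)) :=
  insert {x | tropTerm (c p.1) p.1 x = tropTerm (c p.2) p.2 x}
    ((fun γ => {x | tropTerm (c p.1) p.1 x ≤ tropTerm (c γ) γ x}) '' A)

theorem finite_tropCellConstraints {n : ℕ} (A : Finset (Fin n → ℕ)) (c : (Fin n → ℕ) → ℝ)
    (p : (Fin n → ℕ) × (Fin n → ℕ)) : (tropCellConstraints A c p).Finite :=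
  (A.finite_toSet.image _).insert _

theorem isTermConstraint_of_mem_tropCellConstraints {n m : ℕ} {A : Fin m → Finset (Fin n → ℕ)}
    {c : Fin m → (Fin n → ℕ) → ℝ} {i : Fin m} {p : (Fin n → ℕ) × (Fin n → ℕ)}
    {R : Set (Fin n → ℝ)} (hp₁ : p.1 ∈ A i) (hp₂ : p.2 ∈ A i)
    (hR : R ∈ tropCellConstraints (A i) (c i) p) :
    IsTermConstraint A c R := by
  obtain rfl | ⟨γ, hγ, rfl⟩ := hR
  · exact ⟨i, i, p.1, hp₁, p.2, hp₂, Or.inl rfl⟩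
  · exact ⟨i, i, p.1, hp₁, γ, hγ, Or.inr rfl⟩

theorem tropHyp_eq_iUnion_cells {n : ℕ} (A : Finset (Fin n → ℕ)) (c : (Fin n → ℕ) → ℝ) :
    tropHyp A c = ⋃ p : A.offDiag, ⋂₀ tropCellConstraints A c p := by
  ext x
  simp only [tropHyp, tropCellConstraints, Set.mem_ofPred_eq, Set.mem_iUnion, Subtype.exists,
    Finset.mem_offDiag, Prod.exists, exists_prop, Set.mem_sInter, Set.forall_mem_insert,
    Set.forall_mem_image, SetLike.mem_coe]
  constructor
  · rintro ⟨α, hα, β, hβ, hne, heq, hle⟩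
    exact ⟨α, β, ⟨hα, hβ, hne⟩, heq, hle⟩
  · rintro ⟨α, β, ⟨hα, hβ, hne⟩, heq, hle⟩
    exact ⟨α, hα, β, hβ, hne, heq, hle⟩

theorem iInter_tropHyp_eq_iUnion_cells {n : ℕ} {ι : Sort*} (A : ι → Finset (Fin n → ℕ))
    (c : ι → (Fin n → ℕ) → ℝ) :
    ⋂ i, tropHyp (A i) (c i) =
      ⋃ p : ∀ i, (A i).offDiag, ⋂₀ ⋃ i, tropCellConstraints (A i) (c i) (p i) := by
  simp only [tropHyp_eq_iUnion_cells, Set.sInter_iUnion]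
  exact iInf_iSup_eq

/-- A tropical prevariety `⋂ i, T(f_i)` is a finite union of closed convex
sets `Q s`, each being the solution set of finitely many affine linear
equations and non-strict inequalities between tropical terms of the `f_i`;
in particular it is closed. -/
theorem prevariety_union_of_polyhedra (n m : ℕ)
    (A : Fin m → Finset (Fin n → ℕ)) (c : Fin m → (Fin n → ℕ) → ℝ)
    (hA : ∀ i, (A i).Nonempty) :
    (∃ (t : ℕ) (Q : Fin t → Set (Fin n → ℝ)),
      (∀ s, IsClosed (Q s) ∧ Convex ℝ (Q s) ∧
        ∃ F : Set (Set (Fin n → ℝ)), F.Finite ∧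
          (∀ R ∈ F, IsTermConstraint A c R) ∧ Q s = ⋂₀ F) ∧
      (⋂ i, tropHyp (A i) (c i)) = ⋃ s, Q s) ∧
    IsClosed (⋂ i, tropHyp (A i) (c i)) := by
  let constraints (p : ∀ i, (A i).offDiag) := ⋃ i, tropCellConstraints (A i) (c i) (p i)
  have isTermConstraint_of_mem : ∀ p, ∀ R ∈ constraints p, IsTermConstraint A c R := by
    intro p R hR
    obtain ⟨i, hRi⟩ := Set.mem_iUnion.mp hR
    obtain ⟨hp₁, hp₂, -⟩ := mem_offDiag.mp (p i).2
    exact isTermConstraint_of_mem_tropCellConstraints hp₁ hp₂ hRi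
  have isClosed_cell (p) : IsClosed (⋂₀ constraints p) :=
    isClosed_sInter fun R hR => (isTermConstraint_of_mem p R hR).isClosed
  have convex_cell (p) : Convex ℝ (⋂₀ constraints p) :=
    convex_sInter fun R hR => (isTermConstraint_of_mem p R hR).convex
  have finite_constraints (p) : (constraints p).Finite :=
    Set.finite_iUnion fun i => finite_tropCellConstraints (A i) (c i) (p i)
  rw [iInter_tropHyp_eq_iUnion_cells]
  refine ⟨?_, isClosed_iUnion_of_finite isClosed_cell⟩
  obtain ⟨t, ⟨e⟩⟩ := Finite.exists_equiv_fin (∀ i, (A i).offDiag)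
  exact ⟨t, fun s => ⋂₀ constraints (e.symm s),
    fun s => ⟨isClosed_cell _, convex_cell _, _, finite_constraints _,
      isTermConstraint_of_mem _, rfl⟩,
    (e.symm.surjective.iUnion_comp _).symm⟩
end
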